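/- Let Ω = ∪_{i∈I}(α_i, β_i) ⊆ ℝ be a finite or countable union of pairwise disjoint open intervals (α_i ∈ [−∞,∞), β_i ∈ (−∞,∞]) with l := inf_{i∈I}(β_i − α_i) > 0. Suppose B = (b_{i,k}), indexed by i ∈ I with α_i > −∞ and k ∈ I with β_k < ∞, is such that (x_i)_i ↦ (Σ_i x_i b_{i,k})_k defines a unitary operator from ℓ²({i : α_i > −∞}) onto ℓ²({k : β_k < ∞}). Then there exists a strongly continuous unitary group (U(t))_{t∈ℝ} on L²(Ω) with the integrability property such that for every 0 < ε < l: if α_i > −∞ and f ∈ L²(Ω) vanishes a.e. outside [α_i, α_i + ε], then U(ε)f = Σ_{k∈I, β_k<∞} b_{i,k} T(α_i + ε − β_k)f; and if β_k < ∞ and f vanishes a.e. outside [β_k − ε, β_k], then U(−ε)f = Σ_{j∈I, α_j>−∞} conj(b_{j,k}) T(β_k − α_j − ε)f. -/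

import Mathlib

open MeasureTheory

/-!
For a time `t ≥ 0` shorter than all the intervals, let `S(t)` translate a function by `t` within
each interval. This leaves the values on the intervals of length `t` at the finite right endpoints
undetermined, and it loses the values on those at the finite left endpoints. All these intervals
are copies of `(0, t)`, so at each point of `(0, t)` the lost values form a family in `ℓ²` to which
the unitary matrix `B` applies, and the resulting family supplies the undetermined values. Hence
`S(t)` is unitary. Since no point crosses a whole interval in the time `s + t` when this time is
short, `S(s + t) = S(s) S(t)`, and `U(t) = S(t / n) ^ n` for large `n` extends `S` to a group.

Strong continuity follows from the continuity of translations in `L²(ℝ)` and from the vanishing of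
the `L²` mass near the endpoints. The integrability property holds because the segment from `x` to
`x + s` is connected: if it stays in `Ω`, then it stays in a single interval.
-/

section

open Set Filter Topology

open scoped ComplexConjugate ENNReal NNReal lp

section UnitaryMatrix

variable {K L 𝕜 : Type*} [RCLike 𝕜]

lemma lp_two_tsum_enorm_sq (y : ℓ²(K, 𝕜)) : ∑' k, ‖y k‖ₑ ^ 2 = ‖y‖ₑ ^ 2 := by
  have h := lp.hasSum_norm (p := 2) (by norm_num) y
  simp only [ENNReal.toReal_ofNat, Real.rpow_ofNat] at h
  simp only [← ofReal_norm, ← ENNReal.ofReal_pow (norm_nonneg _)]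
  rw [← ENNReal.ofReal_tsum_of_nonneg (fun _ => by positivity) h.summable, h.tsum_eq]

lemma memℓp_two_of_tsum_enorm_sq_ne_top {E : Type*} [NormedAddCommGroup E] {z : K → E}
    (h : ∑' k, ‖z k‖ₑ ^ 2 ≠ ∞) : Memℓp z 2 := by
  rw [memℓp_gen_iff (by norm_num)]
  simpa using ENNReal.summable_toReal h

/-- `B` is the matrix of a unitary operator from `ℓ²(L)` onto `ℓ²(K)`, acting on row vectors. -/
def IsUnitaryMatrix (B : L → K → 𝕜) : Prop :=
  ∃ W : ℓ²(L, 𝕜) ≃ₗᵢ[𝕜] ℓ²(K, 𝕜), ∀ x k, W x k = ∑' i, x i * B i k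

namespace IsUnitaryMatrix

variable {B : L → K → 𝕜} {v : L → 𝕜}

lemma apply_single [DecidableEq L] {W : ℓ²(L, 𝕜) ≃ₗᵢ[𝕜] ℓ²(K, 𝕜)}
    (hW : ∀ x k, W x k = ∑' i, x i * B i k) (i : L) (k : K) : W (lp.single 2 i 1) k = B i k := by
  rw [hW, tsum_eq_single i fun j hj => by simp [hj]]
  simp

lemma symm_single [DecidableEq K] {W : ℓ²(L, 𝕜) ≃ₗᵢ[𝕜] ℓ²(K, 𝕜)}
    (hW : ∀ x k, W x k = ∑' i, x i * B i k) (k : K) (i : L) :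
    W.symm (lp.single 2 k 1) i = conj (B i k) := by
  classical
  have h := W.inner_map_map (W.symm (lp.single 2 k 1)) (lp.single 2 i 1)
  rw [W.apply_symm_apply, lp.inner_single_left, lp.inner_single_right, apply_single hW] at h
  simpa using congrArg conj h.symm

lemma conjTranspose (hB : IsUnitaryMatrix B) : IsUnitaryMatrix fun k i => conj (B i k) := by
  classical
  obtain ⟨W, hW⟩ := hB
  refine ⟨W.symm, fun y i => ?_⟩
  have h := W.symm.inner_map_map (W (lp.single 2 i 1)) y
  rw [W.symm_apply_apply, lp.inner_single_left, lp.inner_eq_tsum] at h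
  simpa [apply_single hW] using h

lemma summable_mul (hB : IsUnitaryMatrix B) (hv : Memℓp v 2) (k : K) :
    Summable fun i => v i * B i k := by
  classical
  obtain ⟨W, hW⟩ := hB
  simpa [symm_single hW] using
    lp.summable_inner (𝕜 := 𝕜) (W.symm (lp.single 2 k 1)) (⟨v, hv⟩ : ℓ²(L, 𝕜))

lemma tsum_enorm_sq_tsum_mul (hB : IsUnitaryMatrix B) (hv : Memℓp v 2) :
    ∑' k, ‖∑' i, v i * B i k‖ₑ ^ 2 = ∑' i, ‖v i‖ₑ ^ 2 := by
  obtain ⟨W, hW⟩ := hB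
  have h := lp_two_tsum_enorm_sq (W ⟨v, hv⟩)
  rw [LinearIsometryEquiv.enorm_map, ← lp_two_tsum_enorm_sq] at h
  simpa only [hW] using h

lemma tsum_tsum_mul_mul_conj (hB : IsUnitaryMatrix B) (hv : Memℓp v 2) (j : L) :
    ∑' k, (∑' i, v i * B i k) * conj (B j k) = v j := by
  classical
  obtain ⟨W, hW⟩ := hB
  have h := W.inner_map_map (lp.single 2 j 1) ⟨v, hv⟩
  rw [lp.inner_eq_tsum, lp.inner_single_left] at h
  simpa [apply_single hW, hW] using h

end IsUnitaryMatrix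

end UnitaryMatrix

section LpTools

variable {X E K : Type*} [MeasurableSpace X] {μ : Measure X} [NormedAddCommGroup E] {p : ℝ≥0∞}

lemma lintegral_enorm_sq_eq_eLpNorm_sq (μ : Measure X) (f : X → E) :
    ∫⁻ x, ‖f x‖ₑ ^ 2 ∂μ = eLpNorm f 2 μ ^ 2 := by
  have := eLpNorm_nnreal_pow_eq_lintegral (μ := μ) (f := f) (p := 2) (by norm_num)
  simpa using this.symm

lemma eLpNorm_sq_eq_add_compl (f : X → E) {s : Set X} (hs : MeasurableSet s) :
    eLpNorm f 2 μ ^ 2 = eLpNorm f 2 (μ.restrict s) ^ 2 + eLpNorm f 2 (μ.restrict sᶜ) ^ 2 := by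
  simp only [← lintegral_enorm_sq_eq_eLpNorm_sq, lintegral_add_compl _ hs]

lemma eLpNorm_two_le_add_compl (f : X → E) {s : Set X} (hs : MeasurableSet s) :
    eLpNorm f 2 μ ≤ eLpNorm f 2 (μ.restrict s) + eLpNorm f 2 (μ.restrict sᶜ) := by
  refine (ENNReal.pow_right_strictMono two_ne_zero).le_iff_le.1 ?_
  rw [eLpNorm_sq_eq_add_compl f hs, add_sq, add_right_comm]
  exact le_self_add

lemma tendsto_eLpNorm_indicator_zero {ι : Type*} {l : Filter ι} [l.IsCountablyGenerated]
    {f : X → E} (hf : MemLp f p μ) (hp : p ≠ ∞) {Z : ι → Set X} (hZ : ∀ n, MeasurableSet (Z n))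
    (h : ∀ᵐ x ∂μ, ∀ᶠ n in l, x ∈ Z n → f x = 0) :
    Tendsto (fun n => eLpNorm ((Z n).indicator f) p μ) l (𝓝 0) := by
  obtain rfl | hp0 := eq_or_ne p 0
  · simpa using tendsto_const_nhds
  have hpos : 0 < p.toReal := ENNReal.toReal_pos hp0 hp
  have hint : Tendsto (fun n => ∫⁻ x, ‖(Z n).indicator f x‖ₑ ^ p.toReal ∂μ) l
      (𝓝 (∫⁻ _, 0 ∂μ)) := by
    refine tendsto_lintegral_filter_of_dominated_convergence' (fun x => ‖f x‖ₑ ^ p.toReal)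
      (.of_forall fun n => (hf.1.indicator (hZ n)).enorm.pow_const _)
      (.of_forall fun n => .of_forall fun x => ?_)
      (lintegral_rpow_enorm_lt_top_of_eLpNorm_lt_top hp0 hp hf.2).ne ?_
    · by_cases hx : x ∈ Z n <;> simp [hx, hpos]
    · filter_upwards [h] with x hx
      refine tendsto_nhds_of_eventually_eq ?_
      filter_upwards [hx] with n hn
      by_cases hxn : x ∈ Z n <;> simp_all
  have hroot := (ENNReal.continuous_rpow_const (y := 1 / p.toReal)).tendsto _ |>.comp hint
  simpa only [Function.comp_def, ← eLpNorm_eq_lintegral_rpow_enorm_toReal hp0 hp, lintegral_zero,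
    ENNReal.zero_rpow_of_pos (one_div_pos.2 hpos)] using hroot

lemma tendsto_eLpNorm_restrict_zero {ι : Type*} {l : Filter ι} [l.IsCountablyGenerated]
    {f : X → E} (hf : MemLp f p μ) (hp : p ≠ ∞) {Z : ι → Set X} (hZ : ∀ n, MeasurableSet (Z n))
    (h : ∀ᵐ x ∂μ, ∀ᶠ n in l, x ∉ Z n) :
    Tendsto (fun n => eLpNorm f p (μ.restrict (Z n))) l (𝓝 0) := by
  simp only [← eLpNorm_indicator_eq_eLpNorm_restrict (hZ _)]
  exact tendsto_eLpNorm_indicator_zero hf hp hZ <| h.mono fun x hx =>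
    hx.mono fun n hn hxn => absurd hxn hn

lemma sum_sub_eq_neg_indicator_compl {Y : Type*} {s : Finset K} {Z : K → Set Y}
    (hZ : Pairwise fun j k => Disjoint (Z j) (Z k)) (f : Y → E) (x : Y) :
    ∑ k ∈ s, (Z k).indicator f x - f x = -(⋃ k ∈ s, Z k)ᶜ.indicator f x := by
  rw [← Finset.indicator_biUnion_apply s Z (fun j _ k _ hjk => hZ hjk), indicator_compl]
  simp

lemma hasSum_of_ae_eq_indicator [Countable K] [Fact (1 ≤ p)] (hp : p ≠ ∞) {f : Lp E p μ}
    {g : K → Lp E p μ} {Z : K → Set X} (hZ : ∀ k, MeasurableSet (Z k))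
    (hd : Pairwise fun j k => Disjoint (Z j) (Z k)) (hg : ∀ k, g k =ᵐ[μ] (Z k).indicator f)
    (hf : ∀ᵐ x ∂μ, (∀ k, x ∉ Z k) → f x = 0) : HasSum g f := by
  rw [HasSum, SummationFilter.unconditional_filter, Lp.tendsto_Lp_iff_tendsto_eLpNorm']
  refine (tendsto_eLpNorm_indicator_zero (Lp.memLp f) hp (l := (atTop : Filter (Finset K)))
    (Z := fun s => (⋃ k ∈ s, Z k)ᶜ)
    (fun s => (Finset.measurableSet_biUnion _ fun k _ => hZ k).compl) ?_).congr fun s => ?_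
  · filter_upwards [hf] with x hx
    by_cases hk : ∃ k, x ∈ Z k
    · obtain ⟨k, hk⟩ := hk
      filter_upwards [eventually_ge_atTop {k}] with s hs hxs
      exact absurd (mem_biUnion (x := k) (by simpa using hs) hk) hxs
    · exact .of_forall fun s _ => hx (by simpa using hk)
  · rw [← eLpNorm_neg]
    refine eLpNorm_congr_ae ?_
    filter_upwards [ae_all_iff.2 hg, Lp.coeFn_finsetSum s g] with x hgx hsum
    simp only [Pi.neg_apply, Pi.sub_apply, hsum, Finset.sum_apply, hgx]
    exact (sum_sub_eq_neg_indicator_compl hd f x).symm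

lemma tendsto_eLpNorm_translate_sub {G : Type*} [AddCommGroup G] [TopologicalSpace G]
    [IsTopologicalAddGroup G] [MeasurableSpace G] [BorelSpace G] {ν : Measure G}
    [IsLocallyFiniteMeasure ν] [ν.InnerRegularCompactLTTop] [ν.IsAddLeftInvariant]
    [Fact (1 ≤ p)] (hp : p ≠ ∞) {f : G → E} (hf : MemLp f p ν) :
    Tendsto (fun t => eLpNorm (fun x => f (x + t) - f x) p ν) (𝓝 0) (𝓝 0) := by
  have : Fact (p ≠ ∞) := ⟨hp⟩
  have hcont : Continuous fun t : G => (DomAddAct.mk t : Gᵈᵃᵃ) +ᵥ hf.toLp :=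
    DomAddAct.continuous_mk.vadd continuous_const
  have hlim := hcont.tendsto 0
  rw [DomAddAct.mk_zero, zero_vadd, Lp.tendsto_Lp_iff_tendsto_eLpNorm'] at hlim
  refine hlim.congr fun t => eLpNorm_congr_ae ?_
  filter_upwards [DomAddAct.vadd_Lp_ae_eq (DomAddAct.mk t) hf.toLp, hf.coeFn_toLp,
    (measurePreserving_add_left ν t).quasiMeasurePreserving.ae hf.coeFn_toLp] with x h1 h2 h3
  rw [Pi.sub_apply, h1, h2]
  simp only [Equiv.symm_apply_apply, vadd_eq_add] at h3 ⊢
  rw [h3, add_comm]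

end LpTools

section CellDecomposition

variable {X Y K : Type*} [MeasurableSpace X] [MeasurableSpace Y]

/-- A splitting of the measure space `(X, μ)`, up to null sets, into a measurable set `core` and
pairwise disjoint copies of one model space `(Y, ν)`, indexed by `K`. -/
structure CellDecomposition (K : Type*) (μ : Measure X) (ν : Measure Y) where
  core : Set X
  cell : K → Y → X
  measurableSet_core : MeasurableSet core
  measurableEmbedding_cell : ∀ k, MeasurableEmbedding (cell k)
  injective_cell : Function.Injective (Function.uncurry cell)
  cell_notMem_core : ∀ k y, cell k y ∉ core
  restrict_compl_core : μ.restrict coreᶜ = Measure.sum fun k => ν.map (cell k)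

namespace CellDecomposition

variable {μ : Measure X} {ν : Measure Y} (D : CellDecomposition K μ ν)

lemma cell_inj {j k : K} {y z : Y} : D.cell j y = D.cell k z ↔ j = k ∧ y = z :=
  (D.injective_cell.eq_iff (a := (j, y)) (b := (k, z))).trans Prod.mk_inj

lemma pairwise_disjoint_range_cell :
    Pairwise fun j k => Disjoint (range (D.cell j)) (range (D.cell k)) := fun _ _ hjk =>
  disjoint_left.2 fun _ ⟨_, hy⟩ ⟨_, hz⟩ => hjk (D.cell_inj.1 (hy.trans hz.symm)).1

lemma quasiMeasurePreserving_cell (k : K) : Measure.QuasiMeasurePreserving (D.cell k) ν μ := by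
  refine ⟨(D.measurableEmbedding_cell k).measurable, Measure.absolutelyContinuous_of_le ?_⟩
  calc ν.map (D.cell k) ≤ μ.restrict D.coreᶜ :=
        D.restrict_compl_core ▸ Measure.le_sum (fun k => ν.map (D.cell k)) k
    _ ≤ μ := Measure.restrict_le_self

variable [Countable K]

lemma lintegral_compl_core {F : X → ℝ≥0∞} (hF : AEMeasurable F μ) :
    ∫⁻ x in D.coreᶜ, F x ∂μ = ∫⁻ y, ∑' k, F (D.cell k y) ∂ν := by
  have hcell (k : K) : AEMeasurable (fun y => F (D.cell k y)) ν :=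
    hF.comp_quasiMeasurePreserving (D.quasiMeasurePreserving_cell k)
  rw [lintegral_tsum hcell]
  simp only [D.restrict_compl_core, lintegral_sum_measure,
    (D.measurableEmbedding_cell _).lintegral_map]

lemma ae_restrict_compl_core_iff {P : X → Prop} :
    (∀ᵐ x ∂μ.restrict D.coreᶜ, P x) ↔ ∀ᵐ y ∂ν, ∀ k, P (D.cell k y) := by
  simp only [D.restrict_compl_core, Measure.ae_sum_iff, (D.measurableEmbedding_cell _).ae_map_iff,
    ae_all_iff]

lemma ae_iff {P : X → Prop} : (∀ᵐ x ∂μ, P x) ↔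
    (∀ᵐ x ∂μ.restrict D.core, P x) ∧ ∀ᵐ y ∂ν, ∀ k, P (D.cell k y) := by
  rw [← D.ae_restrict_compl_core_iff, ← ae_add_measure_iff,
    Measure.restrict_add_restrict_compl D.measurableSet_core]

lemma aestronglyMeasurable_iff {E : Type*} [TopologicalSpace E]
    [TopologicalSpace.PseudoMetrizableSpace E] {f : X → E} : AEStronglyMeasurable f μ ↔
      AEStronglyMeasurable f (μ.restrict D.core) ∧
        ∀ k, AEStronglyMeasurable (fun y => f (D.cell k y)) ν := by
  conv_lhs => rw [← Measure.restrict_add_restrict_compl (μ := μ) D.measurableSet_core,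
    aestronglyMeasurable_add_measure_iff, D.restrict_compl_core,
    aestronglyMeasurable_sum_measure_iff]
  simp only [(D.measurableEmbedding_cell _).aestronglyMeasurable_map_iff, Function.comp_def]

lemma ae_memℓp_cell {E : Type*} [NormedAddCommGroup E] {f : X → E} (hf : MemLp f 2 μ) :
    ∀ᵐ y ∂ν, Memℓp (fun k => f (D.cell k y)) 2 := by
  have hcell := (D.aestronglyMeasurable_iff.1 hf.1).2
  have hfin : ∫⁻ y, ∑' k, ‖f (D.cell k y)‖ₑ ^ 2 ∂ν ≠ ∞ := by
    rw [← D.lintegral_compl_core (hf.1.enorm.pow_const 2), lintegral_enorm_sq_eq_eLpNorm_sq]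
    exact ENNReal.pow_ne_top (hf.restrict _).eLpNorm_ne_top
  filter_upwards [ae_lt_top' (.tsum fun k => (hcell k).enorm.pow_const 2) hfin] with y hy
  exact memℓp_two_of_tsum_enorm_sq_ne_top hy.ne

end CellDecomposition

end CellDecomposition

section Transition

variable {X Y K L 𝕜 : Type*} [MeasurableSpace X] [MeasurableSpace Y] [RCLike 𝕜]

/-- Two cell decompositions of the same measure space with the same model space, together with
a measure preserving identification of their cores and a unitary matrix between their cells. Such
data carry functions on the `source` decomposition to functions on the `target` decomposition. -/
structure Transition (K L 𝕜 : Type*) [RCLike 𝕜] (μ : Measure X) (ν : Measure Y) where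
  source : CellDecomposition L μ ν
  target : CellDecomposition K μ ν
  coreEquiv : X ≃ᵐ X
  coreEquiv_mem_core_iff : ∀ x, coreEquiv x ∈ source.core ↔ x ∈ target.core
  measurePreserving_coreEquiv :
    MeasurePreserving coreEquiv (μ.restrict target.core) (μ.restrict source.core)
  matrix : L → K → 𝕜
  isUnitaryMatrix : IsUnitaryMatrix matrix

namespace Transition

variable {μ : Measure X} {ν : Measure Y} (T : Transition K L 𝕜 μ ν) {f g : X → 𝕜} {x : X}

/-- The reverse transition, from the target to the source, with the adjoint matrix. -/
def symm : Transition L K 𝕜 μ ν where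
  source := T.target
  target := T.source
  coreEquiv := T.coreEquiv.symm
  coreEquiv_mem_core_iff x := by
    simpa using (T.coreEquiv_mem_core_iff (T.coreEquiv.symm x)).symm
  measurePreserving_coreEquiv := T.measurePreserving_coreEquiv.symm
  matrix k i := conj (T.matrix i k)
  isUnitaryMatrix := T.isUnitaryMatrix.conjTranspose

lemma symm_symm : T.symm.symm = T := by
  simp [symm]

/-- The function obtained from `f` by composing with the identification of the cores, and by
applying the matrix to the family of values of `f` at the same place of all cells. -/
noncomputable def transfer (f : X → 𝕜) : X → 𝕜 :=
  Function.extend (Function.uncurry T.target.cell)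
    (fun p => ∑' i, f (T.source.cell i p.2) * T.matrix i p.1) (f ∘ T.coreEquiv)

lemma transfer_of_mem_core (hx : x ∈ T.target.core) : T.transfer f x = f (T.coreEquiv x) :=
  Function.extend_apply' _ _ _ fun ⟨(k, y), hy⟩ =>
    T.target.cell_notMem_core k y (hy.symm.subst hx)

lemma transfer_cell (k : K) (y : Y) :
    T.transfer f (T.target.cell k y) = ∑' i, f (T.source.cell i y) * T.matrix i k :=
  T.target.injective_cell.extend_apply _ _ (k, y)

lemma transfer_ae_restrict_core :
    T.transfer f =ᵐ[μ.restrict T.target.core] f ∘ T.coreEquiv := by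
  filter_upwards [ae_restrict_mem T.target.measurableSet_core] with x hx
  exact T.transfer_of_mem_core hx

lemma eLpNorm_transfer_restrict_core (p : ℝ≥0∞) :
    eLpNorm (T.transfer f) p (μ.restrict T.target.core) =
      eLpNorm f p (μ.restrict T.source.core) := by
  rw [eLpNorm_congr_ae T.transfer_ae_restrict_core,
    ← T.measurePreserving_coreEquiv.map_eq, T.coreEquiv.measurableEmbedding.eLpNorm_map_measure]

variable [Countable K] [Countable L]

lemma transfer_congr (h : f =ᵐ[μ] g) : T.transfer f =ᵐ[μ] T.transfer g := by
  obtain ⟨hcore, hcell⟩ := T.source.ae_iff.1 h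
  refine T.target.ae_iff.2 ⟨?_, ?_⟩
  · exact T.transfer_ae_restrict_core.trans <|
      (T.measurePreserving_coreEquiv.quasiMeasurePreserving.ae_eq_comp hcore).trans
        T.transfer_ae_restrict_core.symm
  · filter_upwards [hcell] with y hy k
    simp only [T.transfer_cell, hy]

lemma transfer_add (hf : MemLp f 2 μ) (hg : MemLp g 2 μ) :
    T.transfer (f + g) =ᵐ[μ] T.transfer f + T.transfer g := by
  refine T.target.ae_iff.2 ⟨?_, ?_⟩
  · filter_upwards [ae_restrict_mem T.target.measurableSet_core] with x hx
    simp only [Pi.add_apply, T.transfer_of_mem_core hx]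
  · filter_upwards [T.source.ae_memℓp_cell hf, T.source.ae_memℓp_cell hg] with y hfy hgy k
    simp only [Pi.add_apply, T.transfer_cell, add_mul]
    exact (T.isUnitaryMatrix.summable_mul hfy k).tsum_add (T.isUnitaryMatrix.summable_mul hgy k)

omit [Countable L] in
lemma transfer_smul (c : 𝕜) : T.transfer (c • f) =ᵐ[μ] c • T.transfer f := by
  refine T.target.ae_iff.2 ⟨?_, .of_forall fun y k => ?_⟩
  · filter_upwards [ae_restrict_mem T.target.measurableSet_core] with x hx
    simp only [Pi.smul_apply, T.transfer_of_mem_core hx]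
  · simp only [Pi.smul_apply, T.transfer_cell, smul_eq_mul, mul_assoc, tsum_mul_left]

omit [Countable K] in
lemma symm_transfer_transfer (hf : MemLp f 2 μ) : T.symm.transfer (T.transfer f) =ᵐ[μ] f := by
  refine T.source.ae_iff.2 ⟨?_, ?_⟩
  · filter_upwards [ae_restrict_mem T.source.measurableSet_core] with x hx
    have hx' := (T.symm.coreEquiv_mem_core_iff x).2 hx
    rw [T.symm.transfer_of_mem_core hx, T.transfer_of_mem_core hx']
    exact congrArg f (T.coreEquiv.apply_symm_apply x)
  · filter_upwards [T.source.ae_memℓp_cell hf] with y hy j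
    exact (T.symm.transfer_cell j y).trans <| by
      simpa only [symm, T.transfer_cell] using T.isUnitaryMatrix.tsum_tsum_mul_mul_conj hy j

lemma aestronglyMeasurable_transfer (hf : MemLp f 2 μ) :
    AEStronglyMeasurable (T.transfer f) μ := by
  obtain ⟨hcore, hcell⟩ := T.source.aestronglyMeasurable_iff.1 hf.1
  refine T.target.aestronglyMeasurable_iff.2 ⟨?_, fun k => ?_⟩
  · exact (hcore.comp_measurePreserving T.measurePreserving_coreEquiv).congr
      T.transfer_ae_restrict_core.symm
  · simp only [T.transfer_cell]
    refine aestronglyMeasurable_of_tendsto_ae (atTop : Filter (Finset L))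
      (f := fun s y => ∑ i ∈ s, f (T.source.cell i y) * T.matrix i k)
      (fun s => s.aestronglyMeasurable_fun_sum fun i _ => (hcell i).mul_const _) ?_
    filter_upwards [T.source.ae_memℓp_cell hf] with y hy
    exact (T.isUnitaryMatrix.summable_mul hy k).hasSum

lemma eLpNorm_transfer_restrict_compl_core (hf : MemLp f 2 μ) :
    eLpNorm (T.transfer f) 2 (μ.restrict T.target.coreᶜ) =
      eLpNorm f 2 (μ.restrict T.source.coreᶜ) := by
  refine (ENNReal.pow_right_strictMono two_ne_zero).injective ?_
  simp only [← lintegral_enorm_sq_eq_eLpNorm_sq]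
  rw [T.target.lintegral_compl_core ((T.aestronglyMeasurable_transfer hf).enorm.pow_const 2),
    T.source.lintegral_compl_core (hf.1.enorm.pow_const 2)]
  refine lintegral_congr_ae ?_
  filter_upwards [T.source.ae_memℓp_cell hf] with y hy
  simp only [T.transfer_cell, T.isUnitaryMatrix.tsum_enorm_sq_tsum_mul hy]

lemma eLpNorm_transfer (hf : MemLp f 2 μ) : eLpNorm (T.transfer f) 2 μ = eLpNorm f 2 μ := by
  refine (ENNReal.pow_right_strictMono two_ne_zero).injective ?_
  rw [eLpNorm_sq_eq_add_compl _ T.target.measurableSet_core,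
    T.eLpNorm_transfer_restrict_core, T.eLpNorm_transfer_restrict_compl_core hf,
    ← eLpNorm_sq_eq_add_compl _ T.source.measurableSet_core]

lemma memLp_transfer (hf : MemLp f 2 μ) : MemLp (T.transfer f) 2 μ :=
  ⟨T.aestronglyMeasurable_transfer hf, (T.eLpNorm_transfer hf).trans_lt hf.2⟩

lemma eLpNorm_transfer_sub_le (hf : MemLp f 2 μ) :
    eLpNorm (T.transfer f - f) 2 μ ≤
      eLpNorm (f ∘ T.coreEquiv - f) 2 (μ.restrict T.target.core) +
        (eLpNorm f 2 (μ.restrict T.source.coreᶜ) + eLpNorm f 2 (μ.restrict T.target.coreᶜ)) := by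
  refine (eLpNorm_two_le_add_compl _ T.target.measurableSet_core).trans (add_le_add ?_ ?_)
  · exact (eLpNorm_congr_ae (T.transfer_ae_restrict_core.sub .rfl)).le
  · rw [← T.eLpNorm_transfer_restrict_compl_core hf]
    exact eLpNorm_sub_le (T.memLp_transfer hf).1.restrict hf.1.restrict one_le_two

/-- The transfer of square integrable functions, as a linear isometry of `L²(μ)`. -/
noncomputable def linearIsometry : Lp 𝕜 2 μ →ₗᵢ[𝕜] Lp 𝕜 2 μ where
  toFun f := (T.memLp_transfer (Lp.memLp f)).toLp
  map_add' f g := by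
    rw [← MemLp.toLp_add, MemLp.toLp_eq_toLp_iff]
    exact (T.transfer_congr (Lp.coeFn_add f g)).trans (T.transfer_add (Lp.memLp f) (Lp.memLp g))
  map_smul' c f := by
    rw [RingHom.id_apply, ← MemLp.toLp_const_smul, MemLp.toLp_eq_toLp_iff]
    exact (T.transfer_congr (Lp.coeFn_smul c f)).trans (T.transfer_smul c)
  norm_map' f := by
    refine (Lp.norm_toLp _ (T.memLp_transfer (Lp.memLp f))).trans ?_
    rw [T.eLpNorm_transfer (Lp.memLp f), Lp.norm_def]

lemma coeFn_linearIsometry (f : Lp 𝕜 2 μ) : T.linearIsometry f =ᵐ[μ] T.transfer f :=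
  (T.memLp_transfer (Lp.memLp f)).coeFn_toLp

lemma symm_linearIsometry_apply (f : Lp 𝕜 2 μ) : T.symm.linearIsometry (T.linearIsometry f) = f :=
  Lp.ext <| (T.symm.coeFn_linearIsometry _).trans <|
    (T.symm.transfer_congr (T.coeFn_linearIsometry f)).trans (T.symm_transfer_transfer (Lp.memLp f))

/-- The transfer of square integrable functions, as a unitary operator on `L²(μ)`. -/
noncomputable def equiv : Lp 𝕜 2 μ ≃ₗᵢ[𝕜] Lp 𝕜 2 μ where
  toLinearEquiv := .ofLinearMap T.linearIsometry.toLinearMap T.symm.linearIsometry.toLinearMap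
    (LinearMap.ext fun f => by simpa [symm_symm] using T.symm.symm_linearIsometry_apply f)
    (LinearMap.ext T.symm_linearIsometry_apply)
  norm_map' := T.linearIsometry.norm_map

lemma coeFn_equiv (f : Lp 𝕜 2 μ) : T.equiv f =ᵐ[μ] T.transfer f :=
  T.coeFn_linearIsometry f

lemma inv_equiv : T.equiv⁻¹ = T.symm.equiv :=
  inv_eq_of_mul_eq_one_left (LinearIsometryEquiv.ext T.symm_linearIsometry_apply)

variable {T} in
lemma transfer_of_supported_on_cell {i : L}
    (hf : ∀ᵐ x ∂μ, x ∉ range (T.source.cell i) → f x = 0) :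
    (∀ᵐ x ∂μ, (∀ k, x ∉ range (T.target.cell k)) → T.transfer f x = 0) ∧
      ∀ᵐ y ∂ν, ∀ k, T.transfer f (T.target.cell k y) = T.matrix i k * f (T.source.cell i y) := by
  obtain ⟨hcore, hcell⟩ := T.source.ae_iff.1 hf
  refine ⟨T.target.ae_iff.2 ⟨?_, .of_forall fun y k hk => absurd ⟨y, rfl⟩ (hk k)⟩, ?_⟩
  · filter_upwards [ae_restrict_mem T.target.measurableSet_core,
      T.measurePreserving_coreEquiv.quasiMeasurePreserving.ae hcore] with x hx hfx _
    rw [T.transfer_of_mem_core hx]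
    refine hfx fun ⟨y, hy⟩ => T.source.cell_notMem_core i y ?_
    rwa [hy, T.coreEquiv_mem_core_iff]
  · filter_upwards [hcell] with y hy k
    rw [T.transfer_cell, tsum_eq_single i fun j hj => ?_, mul_comm]
    rw [hy j fun ⟨z, hz⟩ => hj (T.source.cell_inj.1 hz).1.symm, zero_mul]

variable {T} in
lemma hasSum_equiv_of_supported_on_cell {i : L} {f : Lp 𝕜 2 μ} {g : K → Lp 𝕜 2 μ}
    (hf : ∀ᵐ x ∂μ, x ∉ range (T.source.cell i) → f x = 0)
    (hg : ∀ k, ∀ᵐ x ∂μ, x ∉ range (T.target.cell k) → g k x = 0)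
    (hgf : ∀ k, ∀ᵐ y ∂ν, g k (T.target.cell k y) = f (T.source.cell i y)) :
    HasSum (fun k => T.matrix i k • g k) (T.equiv f) := by
  obtain ⟨hzero, hmatrix⟩ := transfer_of_supported_on_cell hf
  refine hasSum_of_ae_eq_indicator (Z := fun k => range (T.target.cell k)) (by norm_num)
    (fun k => (T.target.measurableEmbedding_cell k).measurableSet_range)
    T.target.pairwise_disjoint_range_cell (fun k => ?_) ?_
  · obtain ⟨hgcore, hgcell⟩ := T.target.ae_iff.1 (hg k)
    have heq := T.target.ae_iff.1 (T.coeFn_equiv f)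
    refine (Lp.coeFn_smul _ _).trans (T.target.ae_iff.2 ⟨?_, ?_⟩)
    · filter_upwards [ae_restrict_mem T.target.measurableSet_core, hgcore] with x hx hgx
      have hxk : x ∉ range (T.target.cell k) := fun ⟨y, hy⟩ =>
        T.target.cell_notMem_core k y (hy ▸ hx)
      rw [indicator_of_notMem hxk, Pi.smul_apply, hgx hxk, smul_zero]
    · filter_upwards [hgcell, hmatrix, heq.2, hgf k] with y hgy hmy hey hgfy j
      rw [Pi.smul_apply, smul_eq_mul]
      obtain rfl | hjk := eq_or_ne j k
      · rw [indicator_of_mem (mem_range_self y), hey, hmy, hgfy]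
      · have hj : T.target.cell j y ∉ range (T.target.cell k) := fun ⟨z, hz⟩ =>
          hjk (T.target.cell_inj.1 hz).1.symm
        rw [indicator_of_notMem hj, hgy j hj, mul_zero]
  · filter_upwards [hzero, T.coeFn_equiv f] with x hx hex
    simpa only [hex] using hx

end Transition

end Transition

section LocalHom

variable {G : Type*} [Group G] {u : ℝ≥0 → G} {S : Set ℝ≥0}

lemma map_nsmul_of_local_add (hS : IsLowerSet S)
    (hu : ∀ s t, s + t ∈ S → u (s + t) = u s * u t) {n : ℕ} {t : ℝ≥0} (ht : n • t ∈ S) :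
    u (n • t) = u t ^ n := by
  induction n with
  | zero =>
    rw [zero_nsmul] at ht ⊢
    have h := hu 0 0 (by rwa [add_zero])
    rwa [add_zero, left_eq_mul, ← pow_zero (u t)] at h
  | succ n ih =>
    rw [succ_nsmul] at ht ⊢
    rw [hu _ _ ht, ih (hS le_self_add ht), pow_succ]

lemma pow_map_div_eq_of_local_add (hS : IsLowerSet S)
    (hu : ∀ s t, s + t ∈ S → u (s + t) = u s * u t) {m n : ℕ} (hm : m ≠ 0) (hn : n ≠ 0)
    {t : ℝ≥0} (htm : t / m ∈ S) (htn : t / n ∈ S) : u (t / m) ^ m = u (t / n) ^ n := by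
  have hmul : m • (t / (m * n)) = t / n := by
    rw [nsmul_eq_mul]; field_simp
  have hnul : n • (t / (m * n)) = t / m := by
    rw [nsmul_eq_mul]; field_simp
  calc u (t / m) ^ m = (u (t / (m * n)) ^ n) ^ m := by
        rw [← map_nsmul_of_local_add hS hu (n := n) (by rwa [hnul]), hnul]
    _ = (u (t / (m * n)) ^ m) ^ n := pow_right_comm _ _ _
    _ = u (t / n) ^ n := by rw [← map_nsmul_of_local_add hS hu (by rwa [hmul]), hmul]

lemma eventually_div_natCast_mem (hS : S ∈ 𝓝 0) (t : ℝ≥0) : ∀ᶠ n : ℕ in atTop, t / n ∈ S := by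
  have h : Tendsto (fun n : ℕ => t / n) atTop (𝓝 0) :=
    tendsto_const_div_atTop_nhds_zero_nat t
  exact h hS

lemma exists_monoidHom_nnreal_of_local_add (hS : IsLowerSet S) (hS0 : S ∈ 𝓝 0)
    (hu : ∀ s t, s + t ∈ S → u (s + t) = u s * u t) :
    ∃ V : Multiplicative ℝ≥0 →* G, ∀ t ∈ S, V (.ofAdd t) = u t := by
  have hlarge (t : ℝ≥0) : ∀ᶠ n : ℕ in atTop, n ≠ 0 ∧ t / n ∈ S :=
    (eventually_ne_atTop 0).and (eventually_div_natCast_mem hS0 t)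
  choose N hN hNS using fun t => (hlarge t).exists
  have hV {n : ℕ} {t : ℝ≥0} (hn : n ≠ 0) (ht : t / n ∈ S) : u (t / N t) ^ N t = u (t / n) ^ n :=
    pow_map_div_eq_of_local_add hS hu (hN t) hn (hNS t) ht
  have hVmul (s t : ℝ≥0) : u ((s + t) / N (s + t)) ^ N (s + t) =
      u (s / N s) ^ N s * u (t / N t) ^ N t := by
    obtain ⟨n, hn, hst⟩ := (hlarge (s + t)).exists
    rw [add_div] at hst
    have hcomm : Commute (u (s / n)) (u (t / n)) := by
      rw [Commute, SemiconjBy, ← hu _ _ hst, add_comm, hu _ _ (by rwa [add_comm])]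
    rw [hV hn (by rwa [add_div]), hV hn (hS le_self_add hst), hV hn (hS le_add_self hst), add_div,
      hu _ _ hst, hcomm.mul_pow]
  have hVS (t : ℝ≥0) (ht : t ∈ S) : u (t / N t) ^ N t = u t := by
    simpa using hV one_ne_zero (t := t) (by simpa using ht)
  exact ⟨⟨⟨fun t => u (t.toAdd / N t.toAdd) ^ N t.toAdd, by
    have h := hVmul 0 0
    rwa [add_zero, left_eq_mul] at h⟩, fun s t => hVmul _ _⟩, hVS⟩

lemma exists_monoidHom_real_of_nnreal (V : Multiplicative ℝ≥0 →* G) :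
    ∃ U : Multiplicative ℝ →* G, ∀ t : ℝ≥0, U (.ofAdd (t : ℝ)) = V (.ofAdd t) := by
  have hadd (s t : ℝ≥0) : V (.ofAdd s) * V (.ofAdd t) = V (.ofAdd (s + t)) := (map_mul V _ _).symm
  have hcomm (s t : ℝ≥0) : Commute (V (.ofAdd s)) (V (.ofAdd t)) := by
    rw [Commute, SemiconjBy, hadd, hadd, add_comm]
  have hdiv {a b c d : ℝ≥0} (h : (a : ℝ) - b = c - d) :
      V (.ofAdd a) / V (.ofAdd b) = V (.ofAdd c) / V (.ofAdd d) := by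
    have had : a + d = c + b := NNReal.eq (by push_cast; linarith)
    rw [(hcomm b d).div_eq_div_iff_of_isUnit (Group.isUnit _) (Group.isUnit _), hadd, hadd, had]
  have hparts (x : ℝ) : (x.toNNReal : ℝ) - (-x).toNNReal = x := by
    simp only [Real.coe_toNNReal', max_zero_sub_max_neg_zero_eq_self]
  have hmul (x y : ℝ) : V (.ofAdd (x + y).toNNReal) / V (.ofAdd (-(x + y)).toNNReal) =
      V (.ofAdd x.toNNReal) / V (.ofAdd (-x).toNNReal) *
        (V (.ofAdd y.toNNReal) / V (.ofAdd (-y).toNNReal)) := by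
    rw [(hcomm _ _).div_mul_div_comm (hcomm _ _).inv_left, hadd, hadd]
    refine hdiv ?_
    push_cast
    linarith [hparts x, hparts y, hparts (x + y)]
  refine ⟨.mk' (fun x => V (.ofAdd x.toAdd.toNNReal) / V (.ofAdd (-x.toAdd).toNNReal))
    fun x y => hmul _ _, fun t => ?_⟩
  refine (hdiv (c := t) (d := 0) ?_).trans ?_ <;> simp

end LocalHom

section StrongContinuity

variable {𝕜 E : Type*} [RCLike 𝕜] [NormedAddCommGroup E] [NormedSpace 𝕜 E]
  {U : Multiplicative ℝ →* (E ≃ₗᵢ[𝕜] E)} {x : E}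

lemma enorm_map_ofAdd_sub_eq_abs (s t : ℝ) :
    ‖U (.ofAdd t) x - U (.ofAdd s) x‖ₑ = ‖U (.ofAdd |t - s|) x - x‖ₑ := by
  wlog hst : s ≤ t generalizing s t
  · rw [← enorm_neg, neg_sub, this t s (le_of_not_ge hst), abs_sub_comm]
  have h : U (.ofAdd t) x = U (.ofAdd s) (U (.ofAdd (t - s)) x) := by
    rw [← Function.comp_apply (f := U _), ← LinearIsometryEquiv.coe_mul, ← map_mul, ← ofAdd_add,
      add_sub_cancel]
  rw [abs_of_nonneg (sub_nonneg.2 hst), h, ← map_sub, LinearIsometryEquiv.enorm_map]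

lemma continuous_of_tendsto_zero (h : Tendsto (fun t : ℝ≥0 => U (.ofAdd (t : ℝ)) x) (𝓝 0) (𝓝 x)) :
    Continuous fun t : ℝ => U (.ofAdd t) x := by
  refine continuous_iff_continuousAt.2 fun s => ?_
  have hdist : Tendsto (fun t : ℝ => Real.toNNReal |t - s|) (𝓝 s) (𝓝 0) := by
    have hc : Continuous fun t : ℝ => Real.toNNReal |t - s| := by fun_prop
    simpa using hc.tendsto s
  rw [ContinuousAt, tendsto_iff_edist_tendsto_0]
  simpa only [edist_eq_enorm_sub, enorm_map_ofAdd_sub_eq_abs, Function.comp_def,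
    Real.coe_toNNReal _ (abs_nonneg _)] using (tendsto_iff_edist_tendsto_0.1 h).comp hdist

end StrongContinuity

section TranslatesOn

variable {𝕜 E : Type*} [RCLike 𝕜] [NormedAddCommGroup E] [NormedSpace 𝕜 E] {p : ℝ≥0∞}
  [Fact (1 ≤ p)] {μ : Measure ℝ} {J : Set ℝ} {s t : ℝ} {V W : Lp E p μ ≃ₗᵢ[𝕜] Lp E p μ}

/-- The operator `V` acts as the translation by `s` at the points that do not leave `J`. -/
def TranslatesOn (J : Set ℝ) (s : ℝ) (V : Lp E p μ ≃ₗᵢ[𝕜] Lp E p μ) : Prop :=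
  ∀ f : Lp E p μ, ∀ᵐ x, x ∈ J → x + s ∈ J → V f x = f (x + s)

namespace TranslatesOn

lemma mul (hV : TranslatesOn J s V) (hW : TranslatesOn J t W)
    (hJ : ∀ x ∈ J, x + (s + t) ∈ J → x + s ∈ J) : TranslatesOn J (s + t) (V * W) := fun f => by
  filter_upwards [hV (W f), (measurePreserving_add_right volume s).quasiMeasurePreserving.ae (hW f)]
    with x hVx hWx hx hxst
  have hxs := hJ x hx hxst
  rw [← add_assoc] at hxst ⊢
  exact (hVx hx hxs).trans (hWx hxs hxst)

lemma inv (hV : TranslatesOn J s V) : TranslatesOn J (-s) V⁻¹ := fun f => by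
  filter_upwards [(measurePreserving_add_right volume (-s)).quasiMeasurePreserving.ae
    (hV (V⁻¹ f))] with x hVx hx hxs
  rw [neg_add_cancel_right, show V (V⁻¹ f) = f from V.apply_symm_apply f] at hVx
  exact (hVx hxs hx).symm

lemma pow [hJ : J.OrdConnected] (hs : 0 ≤ s) (hV : TranslatesOn J s V) (n : ℕ) :
    TranslatesOn J (n • s) (V ^ n) := by
  induction n with
  | zero => exact fun f => .of_forall fun x _ _ => by simp
  | succ n ih =>
    rw [succ_nsmul, pow_succ]
    refine ih.mul hV fun x hx hxs => hJ.out hx hxs ⟨?_, ?_⟩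
    · linarith [nsmul_nonneg hs n]
    · linarith

lemma of_monoidHom [J.OrdConnected] {U : Multiplicative ℝ →* (Lp E p μ ≃ₗᵢ[𝕜] Lp E p μ)}
    {S : Set ℝ≥0} (hS : S ∈ 𝓝 0) (hU : ∀ t ∈ S, TranslatesOn J (t : ℝ) (U (.ofAdd (t : ℝ))))
    (s : ℝ) : TranslatesOn J s (U (.ofAdd s)) := by
  wlog hs : 0 ≤ s generalizing s
  · simpa using (this (-s) (by linarith)).inv
  lift s to ℝ≥0 using hs
  obtain ⟨n, hn, hnS⟩ := ((eventually_ne_atTop 0).and (eventually_div_natCast_mem hS s)).exists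
  have hns : n • ((s / n : ℝ≥0) : ℝ) = s := by rw [nsmul_eq_mul]; push_cast; field_simp
  have h := (hU _ hnS).pow (by positivity) n
  rwa [← map_pow, ← ofAdd_nsmul, hns] at h

end TranslatesOn

end TranslatesOn

section TranslationCells

variable {K L 𝕜 : Type*} [RCLike 𝕜] {t : ℝ} {Ω : Set ℝ}

lemma measurableEmbedding_Ioo_add (t c : ℝ) :
    MeasurableEmbedding fun y : Ioo 0 t => (y : ℝ) + c :=
  (measurableEmbedding_addRight c).comp (.subtype_coe measurableSet_Ioo)

lemma range_Ioo_add (t c : ℝ) : range (fun y : Ioo 0 t => (y : ℝ) + c) = Ioo c (c + t) := by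
  have h := image_add_const_Ioo c 0 t
  rwa [zero_add, add_comm t, ← Subtype.range_coe (s := Ioo 0 t), ← range_comp] at h

/-- Lebesgue measure on the interval `(0, t)`, the model space of the cells of length `t`. -/
noncomputable abbrev volumeIoo (t : ℝ) : Measure (Ioo 0 t) := volume.comap Subtype.val

lemma map_volumeIoo_add (t c : ℝ) :
    (volumeIoo t).map (fun y : Ioo 0 t => (y : ℝ) + c) = volume.restrict (Ioo c (c + t)) := by
  have hmap : (volumeIoo t).map (fun y : Ioo 0 t => (y : ℝ) + c) =
      ((volumeIoo t).map Subtype.val).map (· + c) :=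
    (Measure.map_map (measurable_add_const c) measurable_subtype_coe).symm
  have himage : (· + c) ⁻¹' Ioo c (c + t) = Ioo 0 t := by simp
  rw [hmap, map_comap_subtype_coe measurableSet_Ioo, ← himage]
  exact ((measurePreserving_add_right volume c).restrict_preimage measurableSet_Ioo).map_eq

/-- The cell decomposition of `Ω` into `core` and the intervals `(c k, c k + t)`. -/
noncomputable def CellDecomposition.translates [Countable K] (t : ℝ) (c : K → ℝ) {core : Set ℝ}
    (hcore : MeasurableSet core)
    (hdisj : Pairwise fun j k => Disjoint (Ioo (c j) (c j + t)) (Ioo (c k) (c k + t)))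
    (hcell : ∀ k, Disjoint core (Ioo (c k) (c k + t)))
    (hunion : (Ω \ core : Set ℝ) =ᵐ[volume] ⋃ k, Ioo (c k) (c k + t)) :
    CellDecomposition K (volume.restrict Ω) (volumeIoo t) where
  core := core
  cell k y := y + c k
  measurableSet_core := hcore
  measurableEmbedding_cell k := measurableEmbedding_Ioo_add t (c k)
  injective_cell := by
    rintro ⟨j, y⟩ ⟨k, z⟩ h
    have hmem (k : K) (y : Ioo 0 t) : y + c k ∈ Ioo (c k) (c k + t) :=
      range_Ioo_add t (c k) ▸ mem_range_self y
    obtain rfl : j = k := of_not_not fun hjk => (hdisj hjk).ne_of_mem (hmem j y) (hmem k z) h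
    simpa [Function.uncurry, Subtype.ext_iff] using h
  cell_notMem_core k y hy := (hcell k).ne_of_mem hy (range_Ioo_add t (c k) ▸ mem_range_self y) rfl
  restrict_compl_core := by
    have hdiff : (volume.restrict Ω).restrict coreᶜ = volume.restrict (Ω \ core) := by
      rw [Measure.restrict_restrict hcore.compl, inter_comm, sdiff_eq]
    rw [hdiff, Measure.restrict_congr_set hunion,
      Measure.restrict_iUnion hdisj fun _ => measurableSet_Ioo]
    simp only [map_volumeIoo_add]

lemma exists_hasSum_equiv_of_supported_on_Icc [Countable K] [Countable L] (hΩ : MeasurableSet Ω)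
    (T : Transition K L 𝕜 (volume.restrict Ω) (volumeIoo t)) {a : ℝ} {c : K → ℝ}
    {i : L} (ha : ∀ y, T.source.cell i y = y + a) (hc : ∀ k y, T.target.cell k y = y + c k)
    {f : Lp 𝕜 2 (volume.restrict Ω)}
    (hf : ∀ᵐ x ∂volume.restrict Ω, x ∉ Icc a (a + t) → f x = 0) :
    ∃ g : K → Lp 𝕜 2 (volume.restrict Ω),
      (∀ k, g k =ᵐ[volume.restrict Ω] {x | x + (a - c k) ∈ Ω}.indicator
        fun x => f (x + (a - c k))) ∧
      HasSum (fun k => T.matrix i k • g k) (T.equiv f) := by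
  have hmem (k : K) : MemLp ({x | x + (a - c k) ∈ Ω}.indicator fun x => f (x + (a - c k))) 2
      (volume.restrict Ω) :=
    (((memLp_indicator_iff_restrict hΩ).2 (Lp.memLp f)).comp_measurePreserving
      (measurePreserving_add_right volume (a - c k))).restrict Ω
  have hsource : range (T.source.cell i) = Ioo a (a + t) := by
    rw [← range_Ioo_add, funext ha]
  have htarget (k : K) : range (T.target.cell k) = Ioo (c k) (c k + t) := by
    rw [← range_Ioo_add, funext (hc k)]
  have hcellΩ : ∀ᵐ y : Ioo 0 t ∂volumeIoo t, (y : ℝ) + a ∈ Ω := by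
    simpa only [ha] using (T.source.quasiMeasurePreserving_cell i).ae (ae_restrict_mem hΩ)
  have hfIoo : ∀ᵐ x, x ∈ Ω → x ∉ Ioo a (a + t) → f x = 0 := by
    filter_upwards [(ae_restrict_iff' hΩ).1 hf, Measure.ae_ne volume a,
      Measure.ae_ne volume (a + t)] with x hx hxa hxat hxΩ hxI
    exact hx hxΩ fun h => hxI ⟨h.1.lt_of_ne' hxa, h.2.lt_of_ne hxat⟩
  have hzero (k : K) : ∀ᵐ x, x + (a - c k) ∈ Ω → x + (a - c k) ∉ Ioo a (a + t) →
      f (x + (a - c k)) = 0 :=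
    (measurePreserving_add_right volume (a - c k)).quasiMeasurePreserving.ae hfIoo
  refine ⟨fun k => (hmem k).toLp, fun k => (hmem k).coeFn_toLp,
    Transition.hasSum_equiv_of_supported_on_cell ?_ (fun k => ?_) fun k => ?_⟩
  · rwa [hsource, ae_restrict_iff' hΩ]
  · filter_upwards [(hmem k).coeFn_toLp, ae_restrict_of_ae (hzero k)] with x hgx hx hxr
    rw [htarget] at hxr
    rw [hgx, indicator_apply_eq_zero]
    refine fun hxΩ => hx hxΩ fun h => hxr ⟨?_, ?_⟩ <;> linarith [h.1, h.2]
  · filter_upwards [hcellΩ, (T.target.quasiMeasurePreserving_cell k).ae (hmem k).coeFn_toLp]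
      with y hy hgy
    have hya : (y : ℝ) + c k + (a - c k) = y + a := by ring
    rw [hgy, hc, ha, indicator_of_mem (by rwa [mem_ofPred_eq, hya]), hya]

end TranslationCells

lemma exists_subset_of_isPreconnected {I X : Type*} [TopologicalSpace X] {O : I → Set X}
    {S : Set X} (hS : IsPreconnected S) (hne : S.Nonempty) (hO : ∀ i, IsOpen (O i))
    (hd : Pairwise fun i j => Disjoint (O i) (O j)) (hSO : S ⊆ ⋃ i, O i) : ∃ k, S ⊆ O k := by
  obtain ⟨x, hx⟩ := hne
  obtain ⟨k, hk⟩ := mem_iUnion.1 (hSO hx)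
  refine ⟨k, hS.subset_left_of_subset_union (v := ⋃ i ≠ k, O i) (hO k)
    (isOpen_biUnion fun i _ => hO i) ?_ ?_ ⟨x, hx, hk⟩⟩
  · exact disjoint_iUnion₂_right.2 fun i hi => hd hi.symm
  · intro y hy
    obtain ⟨i, hi⟩ := mem_iUnion.1 (hSO hy)
    obtain rfl | h := eq_or_ne i k
    · exact .inl hi
    · exact .inr (mem_biUnion h hi)

/-- Pairwise disjoint open intervals `(left k, right k)` of the real line, which may be unbounded.
-/
structure IntervalFamily (I : Type*) where
  left : I → EReal
  right : I → EReal
  left_ne_top : ∀ k, left k ≠ ⊤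
  right_ne_bot : ∀ k, right k ≠ ⊥
  pairwise_disjoint : Pairwise fun j k => Disjoint
    {x : ℝ | left j < (x : EReal) ∧ (x : EReal) < right j}
    {x : ℝ | left k < (x : EReal) ∧ (x : EReal) < right k}

namespace IntervalFamily

section Intervals

variable {I : Type*} (F : IntervalFamily I)

/-- The interval of the family with index `k`. -/
abbrev interval (k : I) : Set ℝ := {x : ℝ | F.left k < (x : EReal) ∧ (x : EReal) < F.right k}

/-- The union of the intervals of the family. -/
abbrev union : Set ℝ := ⋃ k, F.interval k

/-- The indices of the intervals that are bounded below. -/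
abbrev LeftEnd := {i // F.left i ≠ ⊥}

/-- The indices of the intervals that are bounded above. -/
abbrev RightEnd := {k // F.right k ≠ ⊤}

/-- The finite left endpoint with index `i`. -/
noncomputable abbrev leftEnd (i : F.LeftEnd) : ℝ := (F.left i).toReal

/-- The finite right endpoint with index `k`. -/
noncomputable abbrev rightEnd (k : F.RightEnd) : ℝ := (F.right k).toReal

/-- The times that are less than the length of every interval, uniformly. -/
def shortTimes : Set ℝ≥0 := {t | ((t : ℝ) : EReal) < ⨅ k, (F.right k - F.left k)}

/-- The points that belong to the same interval as their translates by `s`. -/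
def core (s : ℝ) : Set ℝ := ⋃ k, F.interval k ∩ (· + s) ⁻¹' F.interval k

variable {F} {j k : I} {s t : ℝ≥0} {x : ℝ}

lemma coe_leftEnd (i : F.LeftEnd) : (F.leftEnd i : EReal) = F.left i :=
  EReal.coe_toReal (F.left_ne_top i) i.2

lemma coe_rightEnd (k : F.RightEnd) : (F.rightEnd k : EReal) = F.right k :=
  EReal.coe_toReal k.2 (F.right_ne_bot k)

lemma leftEnd_lt (i : F.LeftEnd) (hx : x ∈ F.interval i) : F.leftEnd i < x := by
  rw [← EReal.coe_lt_coe_iff, coe_leftEnd]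
  exact hx.1

lemma lt_rightEnd (k : F.RightEnd) (hx : x ∈ F.interval k) : x < F.rightEnd k := by
  rw [← EReal.coe_lt_coe_iff, coe_rightEnd]
  exact hx.2

lemma isOpen_interval (k : I) : IsOpen (F.interval k) :=
  isOpen_Ioo.preimage continuous_coe_real_ereal

instance ordConnected_interval (k : I) : (F.interval k).OrdConnected :=
  ⟨fun _ hx _ hy _ hz => ⟨hx.1.trans_le (EReal.coe_le_coe_iff.2 hz.1),
    (EReal.coe_le_coe_iff.2 hz.2).trans_lt hy.2⟩⟩

lemma eq_of_mem_interval (hj : x ∈ F.interval j) (hk : x ∈ F.interval k) : j = k :=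
  of_not_not fun hjk => (F.pairwise_disjoint hjk).ne_of_mem hj hk rfl

lemma isLowerSet_shortTimes : IsLowerSet F.shortTimes := fun _ _ hst ht =>
  (EReal.coe_le_coe_iff.2 (NNReal.coe_le_coe.2 hst)).trans_lt ht

lemma shortTimes_mem_nhds_zero (h : 0 < ⨅ k, (F.right k - F.left k)) : F.shortTimes ∈ 𝓝 0 := by
  have hcont : Continuous fun t : ℝ≥0 => ((t : ℝ) : EReal) :=
    continuous_coe_real_ereal.comp NNReal.continuous_coe
  exact (isOpen_Iio.preimage hcont).mem_nhds (by simpa using h)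

lemma left_add_lt_right (ht : t ∈ F.shortTimes) (k : I) : F.left k + (t : ℝ) < F.right k := by
  rw [add_comm]
  exact EReal.add_lt_of_lt_sub (ht.trans_le (iInf_le _ k))

lemma mem_interval_of_mem_Ioc (ht : t ∈ F.shortTimes) (i : F.LeftEnd)
    (hx : x ∈ Ioc (F.leftEnd i) (F.leftEnd i + t)) : x ∈ F.interval i := by
  have h := left_add_lt_right ht i
  rw [← coe_leftEnd, ← EReal.coe_add] at h
  refine ⟨?_, (EReal.coe_le_coe_iff.2 hx.2).trans_lt h⟩
  rw [← coe_leftEnd]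
  exact EReal.coe_lt_coe_iff.2 hx.1

lemma mem_interval_of_mem_Ico (ht : t ∈ F.shortTimes) (k : F.RightEnd)
    (hx : x ∈ Ico (F.rightEnd k - t) (F.rightEnd k)) : x ∈ F.interval k := by
  have h := left_add_lt_right ht k
  rw [← coe_rightEnd, ← EReal.lt_sub_iff_add_lt (.inl (EReal.coe_ne_bot _))
    (.inl (EReal.coe_ne_top _)), ← EReal.coe_sub] at h
  refine ⟨h.trans_le (EReal.coe_le_coe_iff.2 hx.1), ?_⟩
  rw [← coe_rightEnd]
  exact EReal.coe_lt_coe_iff.2 hx.2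

lemma exists_rightEnd_of_add_notMem (hx : x ∈ F.interval k) (hxt : x + t ∉ F.interval k) :
    ∃ h : F.right k ≠ ⊤, x ∈ Ico (F.rightEnd ⟨k, h⟩ - t) (F.rightEnd ⟨k, h⟩) := by
  have hle : F.right k ≤ (x + t : ℝ) := not_lt.1 fun h => hxt
    ⟨hx.1.trans_le (EReal.coe_le_coe_iff.2 (le_add_of_nonneg_right t.2)), h⟩
  have htop : F.right k ≠ ⊤ := (hle.trans_lt (EReal.coe_lt_top _)).ne
  refine ⟨htop, ?_, lt_rightEnd ⟨k, htop⟩ hx⟩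
  rw [← coe_rightEnd ⟨k, htop⟩, EReal.coe_le_coe_iff] at hle
  exact sub_le_iff_le_add.2 hle

lemma exists_leftEnd_of_sub_notMem (hx : x ∈ F.interval k) (hxt : x - t ∉ F.interval k) :
    ∃ h : F.left k ≠ ⊥, x ∈ Ioc (F.leftEnd ⟨k, h⟩) (F.leftEnd ⟨k, h⟩ + t) := by
  have hle : (x - t : ℝ) ≤ F.left k := not_lt.1 fun h => hxt
    ⟨h, (EReal.coe_le_coe_iff.2 (sub_le_self x t.2)).trans_lt hx.2⟩
  have hbot : F.left k ≠ ⊥ := ((EReal.bot_lt_coe _).trans_le hle).ne'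
  refine ⟨hbot, leftEnd_lt ⟨k, hbot⟩ hx, ?_⟩
  rw [← coe_leftEnd ⟨k, hbot⟩, EReal.coe_le_coe_iff] at hle
  exact sub_le_iff_le_add.1 hle

lemma mem_core {s : ℝ} : x ∈ F.core s ↔ ∃ k, x ∈ F.interval k ∧ x + s ∈ F.interval k :=
  mem_iUnion

lemma add_mem_core_neg_iff {s : ℝ} : x + s ∈ F.core (-s) ↔ x ∈ F.core s := by
  simp only [mem_core, add_neg_cancel_right, and_comm]

lemma core_subset_union (s : ℝ) : F.core s ⊆ F.union :=
  iUnion_mono fun _ => inter_subset_left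

variable (F) in
lemma measurableSet_union : MeasurableSet F.union :=
  (isOpen_iUnion isOpen_interval).measurableSet

variable (F) in
lemma measurableSet_core (s : ℝ) : MeasurableSet (F.core s) :=
  (isOpen_iUnion fun k => (isOpen_interval k).inter
    ((isOpen_interval k).preimage (continuous_add_const s))).measurableSet

lemma eventually_mem_core (hx : x ∈ F.union) : ∀ᶠ s in 𝓝 (0 : ℝ), x ∈ F.core s := by
  obtain ⟨k, hk⟩ := mem_iUnion.1 hx
  have hcont : Tendsto (fun s => x + s) (𝓝 0) (𝓝 x) := by
    simpa using (continuous_const_add x).tendsto 0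
  filter_upwards [hcont ((isOpen_interval k).mem_nhds hk)] with s hs
  exact mem_core.2 ⟨k, hk, hs⟩

lemma pairwise_disjoint_Ioo_leftEnd (ht : t ∈ F.shortTimes) :
    Pairwise fun i j => Disjoint (Ioo (F.leftEnd i) (F.leftEnd i + t))
      (Ioo (F.leftEnd j) (F.leftEnd j + t)) := fun i j hij =>
  (F.pairwise_disjoint (Subtype.coe_injective.ne hij)).mono
    (fun _ hx => mem_interval_of_mem_Ioc ht i (Ioo_subset_Ioc_self hx))
    (fun _ hx => mem_interval_of_mem_Ioc ht j (Ioo_subset_Ioc_self hx))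

lemma pairwise_disjoint_Ioo_rightEnd (ht : t ∈ F.shortTimes) :
    Pairwise fun j k => Disjoint (Ioo (F.rightEnd j - t) (F.rightEnd j))
      (Ioo (F.rightEnd k - t) (F.rightEnd k)) := fun j k hjk =>
  (F.pairwise_disjoint (Subtype.coe_injective.ne hjk)).mono
    (fun _ hx => mem_interval_of_mem_Ico ht j (Ioo_subset_Ico_self hx))
    (fun _ hx => mem_interval_of_mem_Ico ht k (Ioo_subset_Ico_self hx))

lemma disjoint_core_neg_Ioo_leftEnd (ht : t ∈ F.shortTimes) (i : F.LeftEnd) :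
    Disjoint (F.core (-t)) (Ioo (F.leftEnd i) (F.leftEnd i + t)) := by
  refine disjoint_left.2 fun x hx hxi => ?_
  obtain ⟨j, hj, hjt⟩ := mem_core.1 hx
  obtain rfl := eq_of_mem_interval hj (mem_interval_of_mem_Ioc ht i (Ioo_subset_Ioc_self hxi))
  linarith [leftEnd_lt i hjt, hxi.2]

lemma disjoint_core_Ioo_rightEnd (ht : t ∈ F.shortTimes) (k : F.RightEnd) :
    Disjoint (F.core t) (Ioo (F.rightEnd k - t) (F.rightEnd k)) := by
  refine disjoint_left.2 fun x hx hxk => ?_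
  obtain ⟨j, hj, hjt⟩ := mem_core.1 hx
  obtain rfl := eq_of_mem_interval hj (mem_interval_of_mem_Ico ht k (Ioo_subset_Ico_self hxk))
  linarith [lt_rightEnd k hjt, hxk.1]

variable [Countable I]

lemma union_diff_core_neg_ae_eq (ht : t ∈ F.shortTimes) :
    (F.union \ F.core (-t) : Set ℝ) =ᵐ[volume] ⋃ i, Ioo (F.leftEnd i) (F.leftEnd i + t) := by
  refine eventuallyEq_set.2 ?_
  have hne : ∀ᵐ x : ℝ, ∀ i, x ≠ F.leftEnd i + t := ae_all_iff.2 fun i => Measure.ae_ne volume _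
  filter_upwards [hne] with x hx
  refine ⟨fun ⟨hxΩ, hxc⟩ => ?_, fun hxi => ?_⟩
  · obtain ⟨k, hk⟩ := mem_iUnion.1 hxΩ
    obtain ⟨h, hmem⟩ := exists_leftEnd_of_sub_notMem hk fun hkt => hxc (mem_core.2 ⟨k, hk, hkt⟩)
    exact mem_iUnion.2 ⟨⟨k, h⟩, hmem.1, hmem.2.lt_of_ne (hx _)⟩
  · obtain ⟨i, hi⟩ := mem_iUnion.1 hxi
    exact ⟨mem_iUnion.2 ⟨i, mem_interval_of_mem_Ioc ht i (Ioo_subset_Ioc_self hi)⟩,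
      disjoint_right.1 (disjoint_core_neg_Ioo_leftEnd ht i) hi⟩

lemma union_diff_core_ae_eq (ht : t ∈ F.shortTimes) :
    (F.union \ F.core t : Set ℝ) =ᵐ[volume] ⋃ k, Ioo (F.rightEnd k - t) (F.rightEnd k) := by
  refine eventuallyEq_set.2 ?_
  have hne : ∀ᵐ x : ℝ, ∀ k, x ≠ F.rightEnd k - t := ae_all_iff.2 fun k => Measure.ae_ne volume _
  filter_upwards [hne] with x hx
  refine ⟨fun ⟨hxΩ, hxc⟩ => ?_, fun hxk => ?_⟩
  · obtain ⟨k, hk⟩ := mem_iUnion.1 hxΩ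
    obtain ⟨h, hmem⟩ := exists_rightEnd_of_add_notMem hk fun hkt => hxc (mem_core.2 ⟨k, hk, hkt⟩)
    exact mem_iUnion.2 ⟨⟨k, h⟩, hmem.1.lt_of_ne' (hx _), hmem.2⟩
  · obtain ⟨k, hk⟩ := mem_iUnion.1 hxk
    exact ⟨mem_iUnion.2 ⟨k, mem_interval_of_mem_Ico ht k (Ioo_subset_Ico_self hk)⟩,
      disjoint_right.1 (disjoint_core_Ioo_rightEnd ht k) hk⟩

/-- The decomposition of the union into `core (-t)` and the intervals of length `t` at the finite
left endpoints. -/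
noncomputable def leftCells (ht : t ∈ F.shortTimes) :
    CellDecomposition F.LeftEnd (volume.restrict F.union) (volumeIoo t) :=
  .translates t F.leftEnd (F.measurableSet_core (-t)) (pairwise_disjoint_Ioo_leftEnd ht)
    (disjoint_core_neg_Ioo_leftEnd ht) (union_diff_core_neg_ae_eq ht)

/-- The decomposition of the union into `core t` and the intervals of length `t` at the finite
right endpoints. -/
noncomputable def rightCells (ht : t ∈ F.shortTimes) :
    CellDecomposition F.RightEnd (volume.restrict F.union) (volumeIoo t) :=
  .translates t (fun k => F.rightEnd k - t) (F.measurableSet_core t)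
    (by simpa only [sub_add_cancel] using pairwise_disjoint_Ioo_rightEnd ht)
    (by simpa only [sub_add_cancel] using disjoint_core_Ioo_rightEnd ht)
    (by simpa only [sub_add_cancel] using union_diff_core_ae_eq ht)

end Intervals

section TranslationGroup

variable {I 𝕜 : Type*} [Countable I] [RCLike 𝕜] {F : IntervalFamily I} {s t : ℝ≥0} {x : ℝ}
  {B : F.LeftEnd → F.RightEnd → 𝕜} {f : ℝ → 𝕜}

/-- Translation by a short time `t`: the intervals of length `t` at the right endpoints, which are
moved out of the union, are refilled from those at the left endpoints according to `B`. -/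
noncomputable def transition (ht : t ∈ F.shortTimes) (hB : IsUnitaryMatrix B) :
    Transition F.RightEnd F.LeftEnd 𝕜 (volume.restrict F.union) (volumeIoo t) where
  source := leftCells ht
  target := rightCells ht
  coreEquiv := .addRight (t : ℝ)
  coreEquiv_mem_core_iff _ := add_mem_core_neg_iff
  measurePreserving_coreEquiv := by
    have hpre : (· + (t : ℝ)) ⁻¹' F.core (-t) = F.core t := ext fun _ => add_mem_core_neg_iff
    have h := (measurePreserving_add_right volume (t : ℝ)).restrict_preimage
      (F.measurableSet_core (-t))
    change MeasurePreserving (· + (t : ℝ)) ((volume.restrict F.union).restrict (F.core t))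
      ((volume.restrict F.union).restrict (F.core (-t)))
    simpa only [hpre, Measure.restrict_restrict_of_subset (core_subset_union _)] using h
  matrix := B
  isUnitaryMatrix := hB

lemma transfer_of_add_mem (ht : t ∈ F.shortTimes) (hB : IsUnitaryMatrix B) {k : I}
    (hx : x ∈ F.interval k) (hxt : x + t ∈ F.interval k) :
    (transition ht hB).transfer f x = f (x + t) :=
  (transition ht hB).transfer_of_mem_core (mem_core.2 ⟨k, hx, hxt⟩)

lemma transfer_of_mem_Ioo (ht : t ∈ F.shortTimes) (hB : IsUnitaryMatrix B) (k : F.RightEnd)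
    (hx : x ∈ Ioo (F.rightEnd k - t) (F.rightEnd k)) :
    (transition ht hB).transfer f x =
      ∑' i, f (x + t - F.rightEnd k + F.leftEnd i) * B i k := by
  have hy : x + t - F.rightEnd k ∈ Ioo 0 (t : ℝ) := ⟨by linarith [hx.1], by linarith [hx.2]⟩
  have hcell : (transition ht hB).target.cell k ⟨x + t - F.rightEnd k, hy⟩ = x := by
    change x + t - F.rightEnd k + (F.rightEnd k - t) = x
    ring
  conv_lhs => rw [← hcell]
  exact (transition ht hB).transfer_cell k _

lemma transfer_transfer (hs : s ∈ F.shortTimes) (ht : t ∈ F.shortTimes)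
    (hst : s + t ∈ F.shortTimes) (hB : IsUnitaryMatrix B) (hx : x ∈ F.union)
    (hxs : ∀ k, x ≠ F.rightEnd k - s) (hxst : ∀ k, x ≠ F.rightEnd k - (s + t)) :
    (transition hs hB).transfer ((transition ht hB).transfer f) x =
      (transition hst hB).transfer f x := by
  have hcoe : ((s + t : ℝ≥0) : ℝ) = s + t := NNReal.coe_add s t
  obtain ⟨k, hk⟩ := mem_iUnion.1 hx
  by_cases hks : x + s ∈ F.interval k
  · rw [transfer_of_add_mem hs hB hk hks]
    by_cases hkst : x + s + t ∈ F.interval k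
    · rw [transfer_of_add_mem ht hB hks hkst,
        transfer_of_add_mem hst hB hk (by rwa [hcoe, ← add_assoc]), hcoe, add_assoc]
    · obtain ⟨h, hmem⟩ := exists_rightEnd_of_add_notMem hks hkst
      have hlt : F.rightEnd ⟨k, h⟩ - (s + t) < x :=
        lt_of_le_of_ne' (by linarith [hmem.1]) (hxst _)
      rw [transfer_of_mem_Ioo ht hB ⟨k, h⟩ ⟨by linarith, hmem.2⟩,
        transfer_of_mem_Ioo hst hB ⟨k, h⟩ ⟨hcoe ▸ hlt, lt_rightEnd ⟨k, h⟩ hk⟩, hcoe, add_assoc x]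
  · obtain ⟨h, hmem⟩ := exists_rightEnd_of_add_notMem hk hks
    have hlt : F.rightEnd ⟨k, h⟩ - s < x := hmem.1.lt_of_ne' (hxs _)
    rw [transfer_of_mem_Ioo hs hB ⟨k, h⟩ ⟨hlt, hmem.2⟩,
      transfer_of_mem_Ioo hst hB ⟨k, h⟩ ⟨by rw [hcoe]; linarith [t.2], hmem.2⟩]
    refine tsum_congr fun i => ?_
    rw [transfer_of_add_mem ht hB (k := i)
      (mem_interval_of_mem_Ioc hs i ⟨by linarith, by linarith [hmem.2]⟩)
      (mem_interval_of_mem_Ioc hst i ⟨by linarith [t.2], by rw [hcoe]; linarith [hmem.2]⟩), hcoe]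
    ring_nf

lemma transition_add (hs : s ∈ F.shortTimes) (ht : t ∈ F.shortTimes) (hst : s + t ∈ F.shortTimes)
    (hB : IsUnitaryMatrix B) :
    (transition hst hB).equiv = (transition hs hB).equiv * (transition ht hB).equiv := by
  refine LinearIsometryEquiv.ext fun f => Lp.ext ?_
  refine ((transition hst hB).coeFn_equiv f).trans (.trans ?_
    (((transition hs hB).coeFn_equiv _).trans
      ((transition hs hB).transfer_congr ((transition ht hB).coeFn_equiv f))).symm)
  have hne (r : ℝ) : ∀ᵐ x ∂volume.restrict F.union, ∀ k, x ≠ F.rightEnd k - r :=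
    ae_all_iff.2 fun k => ae_restrict_of_ae (Measure.ae_ne volume _)
  filter_upwards [ae_restrict_mem F.measurableSet_union, hne s, hne (s + t)] with x hx hxs hxst
  exact (transfer_transfer hs ht hst hB hx hxs hxst).symm

lemma exists_monoidHom_eq_transition (hF : 0 < ⨅ k, (F.right k - F.left k))
    (hB : IsUnitaryMatrix B) :
    ∃ U : Multiplicative ℝ →* (Lp 𝕜 2 (volume.restrict F.union) ≃ₗᵢ[𝕜]
        Lp 𝕜 2 (volume.restrict F.union)),
      ∀ (t : ℝ≥0) (ht : t ∈ F.shortTimes), U (.ofAdd (t : ℝ)) = (transition ht hB).equiv := by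
  classical
  obtain ⟨V, hV⟩ := exists_monoidHom_nnreal_of_local_add
    (u := fun t => if ht : t ∈ F.shortTimes then (transition ht hB).equiv else 1)
    isLowerSet_shortTimes (shortTimes_mem_nhds_zero hF) fun s t hst => by
      have hs : s ∈ F.shortTimes := isLowerSet_shortTimes le_self_add hst
      have ht : t ∈ F.shortTimes := isLowerSet_shortTimes le_add_self hst
      simpa only [dif_pos hs, dif_pos ht, dif_pos hst] using transition_add hs ht hst hB
  obtain ⟨U, hU⟩ := exists_monoidHom_real_of_nnreal V
  exact ⟨U, fun t ht => by rw [hU, hV t ht, dif_pos ht]⟩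

lemma enorm_transition_sub_le (ht : t ∈ F.shortTimes) (hB : IsUnitaryMatrix B)
    (f : Lp 𝕜 2 (volume.restrict F.union)) :
    ‖(transition ht hB).equiv f - f‖ₑ ≤
      eLpNorm (fun x => F.union.indicator f (x + t) - F.union.indicator f x) 2 volume +
        (eLpNorm f 2 ((volume.restrict F.union).restrict (F.core (-t))ᶜ) +
          eLpNorm f 2 ((volume.restrict F.union).restrict (F.core t)ᶜ)) := by
  have heq : (transition ht hB).equiv f - f =ᵐ[volume.restrict F.union]
      (transition ht hB).transfer f - f :=
    (Lp.coeFn_sub _ _).trans (((transition ht hB).coeFn_equiv f).sub .rfl)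
  rw [Lp.enorm_def, eLpNorm_congr_ae heq]
  refine ((transition ht hB).eLpNorm_transfer_sub_le (Lp.memLp f)).trans (add_le_add_left ?_ _)
  have hcore : ∀ x ∈ F.core t, f (x + t) - f x =
      F.union.indicator f (x + t) - F.union.indicator f x := fun x hx => by
    rw [indicator_of_mem (core_subset_union _ hx),
      indicator_of_mem (core_subset_union _ (add_mem_core_neg_iff.2 hx))]
  calc eLpNorm (fun x => f (x + t) - f x) 2 ((volume.restrict F.union).restrict (F.core t))
      = eLpNorm (fun x => F.union.indicator f (x + t) - F.union.indicator f x) 2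
          ((volume.restrict F.union).restrict (F.core t)) :=
        eLpNorm_congr_ae (ae_restrict_of_forall_mem (F.measurableSet_core t) hcore)
    _ ≤ _ := eLpNorm_mono_measure _ (Measure.restrict_le_self.trans Measure.restrict_le_self)

omit [Countable I] in
lemma tendsto_eLpNorm_restrict_compl_core {E : Type*} [NormedAddCommGroup E] {p : ℝ≥0∞}
    (hp : p ≠ ∞) {f : ℝ → E} (hf : MemLp f p (volume.restrict F.union)) :
    Tendsto (fun s => eLpNorm f p ((volume.restrict F.union).restrict (F.core s)ᶜ)) (𝓝 0)
      (𝓝 0) := by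
  refine tendsto_eLpNorm_restrict_zero hf hp (fun s => (F.measurableSet_core s).compl) ?_
  filter_upwards [ae_restrict_mem F.measurableSet_union] with x hx
  filter_upwards [eventually_mem_core hx] with s hs using not_not.2 hs

variable {U : Multiplicative ℝ →* (Lp 𝕜 2 (volume.restrict F.union) ≃ₗᵢ[𝕜]
  Lp 𝕜 2 (volume.restrict F.union))} {hB : IsUnitaryMatrix B}

lemma continuous_of_eq_transition (hF : 0 < ⨅ k, (F.right k - F.left k))
    (hU : ∀ (t : ℝ≥0) (ht : t ∈ F.shortTimes), U (.ofAdd (t : ℝ)) = (transition ht hB).equiv)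
    (f : Lp 𝕜 2 (volume.restrict F.union)) : Continuous fun t : ℝ => U (.ofAdd t) f := by
  have hcoe : Tendsto (fun t : ℝ≥0 => (t : ℝ)) (𝓝 0) (𝓝 0) := NNReal.continuous_coe.tendsto 0
  have hneg : Tendsto (fun t : ℝ≥0 => -(t : ℝ)) (𝓝 0) (𝓝 0) := by simpa using hcoe.neg
  have hcore := tendsto_eLpNorm_restrict_compl_core ENNReal.ofNat_ne_top (Lp.memLp f)
  have hindicator : MemLp (F.union.indicator f) 2 volume :=
    (memLp_indicator_iff_restrict F.measurableSet_union).2 (Lp.memLp f)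
  have htranslate := tendsto_eLpNorm_translate_sub ENNReal.ofNat_ne_top hindicator
  have hbound := (htranslate.comp hcoe).add ((hcore.comp hneg).add (hcore.comp hcoe))
  rw [add_zero, add_zero] at hbound
  refine continuous_of_tendsto_zero <| tendsto_iff_edist_tendsto_0.2 <|
    tendsto_of_tendsto_of_tendsto_of_le_of_le' tendsto_const_nhds hbound
      (.of_forall fun _ => zero_le) ?_
  filter_upwards [shortTimes_mem_nhds_zero hF] with t ht
  rw [edist_eq_enorm_sub, hU t ht]
  exact enorm_transition_sub_le ht hB f

lemma translatesOn_transition (ht : t ∈ F.shortTimes) (k : I) :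
    TranslatesOn (F.interval k) (t : ℝ) (transition ht hB).equiv := fun f => by
  filter_upwards [(ae_restrict_iff' F.measurableSet_union).1 ((transition ht hB).coeFn_equiv f)]
    with x hx hk hkt
  rw [hx (mem_iUnion.2 ⟨k, hk⟩), transfer_of_add_mem ht hB hk hkt]

omit [Countable I] in
lemma exists_mem_interval_of_image_subset {V : Set ℝ} {δ s : ℝ}
    (hV : ∀ r : ℝ, |r| < δ → (fun x => x + r) '' V ⊆ F.union) (hs : |s| < δ) (hx : x ∈ V) :
    ∃ k, x ∈ F.interval k ∧ x + s ∈ F.interval k := by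
  have hseg : uIcc x (x + s) ⊆ F.union := fun y hy => by
    have hr : |y - x| < δ := (abs_sub_left_of_mem_uIcc hy).trans_lt (by simpa using hs)
    exact hV _ hr ⟨x, hx, add_sub_cancel x y⟩
  obtain ⟨k, hk⟩ := exists_subset_of_isPreconnected isPreconnected_uIcc nonempty_uIcc
    isOpen_interval F.pairwise_disjoint hseg
  exact ⟨k, hk left_mem_uIcc, hk right_mem_uIcc⟩

lemma ae_eq_translate_of_eq_transition (hF : 0 < ⨅ k, (F.right k - F.left k))
    (hU : ∀ (t : ℝ≥0) (ht : t ∈ F.shortTimes), U (.ofAdd (t : ℝ)) = (transition ht hB).equiv)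
    {V : Set ℝ} (hVm : MeasurableSet V) {δ s : ℝ}
    (hV : ∀ r : ℝ, |r| < δ → (fun x => x + r) '' V ⊆ F.union) (hs : |s| < δ)
    (f : Lp 𝕜 2 (volume.restrict F.union)) :
    ∀ᵐ x ∂volume.restrict V, U (.ofAdd s) f x = f (x + s) := by
  have hJ (k : I) : TranslatesOn (F.interval k) s (U (.ofAdd s)) :=
    .of_monoidHom (shortTimes_mem_nhds_zero hF)
      (fun t ht => (hU t ht).symm ▸ translatesOn_transition ht k) s
  filter_upwards [ae_restrict_mem hVm, ae_restrict_of_ae (ae_all_iff.2 fun k => hJ k f)]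
    with x hxV hx
  obtain ⟨k, hk, hks⟩ := exists_mem_interval_of_image_subset hV hs hxV
  exact hx k hk hks

lemma exists_hasSum_of_supported_at_leftEnd
    (hU : ∀ (t : ℝ≥0) (ht : t ∈ F.shortTimes), U (.ofAdd (t : ℝ)) = (transition ht hB).equiv)
    (ht : t ∈ F.shortTimes) (i : F.LeftEnd) {f : Lp 𝕜 2 (volume.restrict F.union)}
    (hf : ∀ᵐ x ∂volume.restrict F.union, x ∉ Icc (F.leftEnd i) (F.leftEnd i + t) → f x = 0) :
    ∃ g : F.RightEnd → Lp 𝕜 2 (volume.restrict F.union),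
      (∀ k, g k =ᵐ[volume.restrict F.union]
        {x | x + (F.leftEnd i + t - F.rightEnd k) ∈ F.union}.indicator
          fun x => f (x + (F.leftEnd i + t - F.rightEnd k))) ∧
      HasSum (fun k => B i k • g k) (U (.ofAdd (t : ℝ)) f) := by
  rw [hU t ht]
  have hsum := exists_hasSum_equiv_of_supported_on_Icc F.measurableSet_union (transition ht hB)
    (i := i) (c := fun k => F.rightEnd k - t) (fun _ => rfl) (fun _ _ => rfl) hf
  simp only [← sub_add, sub_add_eq_add_sub] at hsum
  exact hsum

lemma exists_hasSum_of_supported_at_rightEnd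
    (hU : ∀ (t : ℝ≥0) (ht : t ∈ F.shortTimes), U (.ofAdd (t : ℝ)) = (transition ht hB).equiv)
    (ht : t ∈ F.shortTimes) (k : F.RightEnd) {f : Lp 𝕜 2 (volume.restrict F.union)}
    (hf : ∀ᵐ x ∂volume.restrict F.union, x ∉ Icc (F.rightEnd k - t) (F.rightEnd k) → f x = 0) :
    ∃ g : F.LeftEnd → Lp 𝕜 2 (volume.restrict F.union),
      (∀ j, g j =ᵐ[volume.restrict F.union]
        {x | x + (F.rightEnd k - F.leftEnd j - t) ∈ F.union}.indicator
          fun x => f (x + (F.rightEnd k - F.leftEnd j - t))) ∧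
      HasSum (fun j => conj (B j k) • g j) (U (.ofAdd (-(t : ℝ))) f) := by
  rw [ofAdd_neg, map_inv, hU t ht, Transition.inv_equiv]
  have hsum := exists_hasSum_equiv_of_supported_on_Icc F.measurableSet_union
    (transition ht hB).symm (i := k) (a := F.rightEnd k - t) (c := F.leftEnd) (fun _ => rfl)
    (fun _ _ => rfl) (by rwa [sub_add_cancel])
  simp only [sub_right_comm _ (t : ℝ)] at hsum
  exact hsum

end TranslationGroup

end IntervalFamily

theorem statement6_general {I 𝕜 : Type*} [Countable I] [RCLike 𝕜] (F : IntervalFamily I)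
    (hF : 0 < ⨅ k, (F.right k - F.left k)) {B : F.LeftEnd → F.RightEnd → 𝕜}
    (hB : IsUnitaryMatrix B) :
    ∃ U : ℝ → (Lp 𝕜 2 (volume.restrict F.union) ≃ₗᵢ[𝕜] Lp 𝕜 2 (volume.restrict F.union)),
      U 0 = .refl 𝕜 (Lp 𝕜 2 (volume.restrict F.union)) ∧
      (∀ s t f, U (s + t) f = U s (U t f)) ∧
      (∀ f, Continuous fun t => U t f) ∧
      (∀ V : Set ℝ, IsOpen V → V ⊆ F.union → ∀ δ : ℝ, 0 < δ →
        (∀ s : ℝ, |s| < δ → (fun x => x + s) '' V ⊆ F.union) →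
        ∀ s : ℝ, |s| < δ → ∀ f, ∀ᵐ x ∂volume.restrict V, U s f x = f (x + s)) ∧
      ∀ ε : ℝ, 0 < ε → (ε : EReal) < ⨅ k, (F.right k - F.left k) →
        (∀ (i : F.LeftEnd) (f : Lp 𝕜 2 (volume.restrict F.union)),
          (∀ᵐ x ∂volume.restrict F.union,
            x ∉ Icc (F.leftEnd i) (F.leftEnd i + ε) → f x = 0) →
          ∃ g : F.RightEnd → Lp 𝕜 2 (volume.restrict F.union),
            (∀ k, g k =ᵐ[volume.restrict F.union]
              {x | x + (F.leftEnd i + ε - F.rightEnd k) ∈ F.union}.indicator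
                fun x => f (x + (F.leftEnd i + ε - F.rightEnd k))) ∧
            HasSum (fun k => B i k • g k) (U ε f)) ∧
        (∀ (k : F.RightEnd) (f : Lp 𝕜 2 (volume.restrict F.union)),
          (∀ᵐ x ∂volume.restrict F.union,
            x ∉ Icc (F.rightEnd k - ε) (F.rightEnd k) → f x = 0) →
          ∃ g : F.LeftEnd → Lp 𝕜 2 (volume.restrict F.union),
            (∀ j, g j =ᵐ[volume.restrict F.union]
              {x | x + (F.rightEnd k - F.leftEnd j - ε) ∈ F.union}.indicator
                fun x => f (x + (F.rightEnd k - F.leftEnd j - ε))) ∧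
            HasSum (fun j => conj (B j k) • g j) (U (-ε) f)) := by
  obtain ⟨U, hU⟩ := F.exists_monoidHom_eq_transition hF hB
  refine ⟨fun t => U (.ofAdd t), map_one U, fun s t f => ?_,
    F.continuous_of_eq_transition hF hU, fun V hVo _ δ _ hV s hs f =>
      F.ae_eq_translate_of_eq_transition hF hU hVo.measurableSet hV hs f, fun ε hε hεl => ?_⟩
  · exact congrArg (· f) (map_mul U (.ofAdd s) (.ofAdd t))
  · lift ε to ℝ≥0 using hε.le
    exact ⟨fun i _ hf => F.exists_hasSum_of_supported_at_leftEnd hU hεl i hf,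
      fun k _ hf => F.exists_hasSum_of_supported_at_rightEnd hU hεl k hf⟩

end

/-- Conversely, given a unitary boundary matrix `B` indexed by the finite left
endpoints and the finite right endpoints of a countable union of disjoint intervals with
lengths bounded below by `l > 0`, there exists a strongly continuous unitary group with the
integrability property whose transitions at the endpoints are governed by `B`. -/
theorem statement6 (I : Type) [Countable I] (α β : I → EReal)
    (hαtop : ∀ i, α i ≠ ⊤) (hβbot : ∀ i, β i ≠ ⊥)
    (hdisj : Pairwise fun i j => Disjoint
      {x : ℝ | α i < (x : EReal) ∧ (x : EReal) < β i}
      {x : ℝ | α j < (x : EReal) ∧ (x : EReal) < β j})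
    (Ω : Set ℝ) (hΩ : Ω = ⋃ i, {x : ℝ | α i < (x : EReal) ∧ (x : EReal) < β i})
    (hl : 0 < ⨅ i, (β i - α i))
    (B : {i : I // α i ≠ ⊥} → {k : I // β k ≠ ⊤} → ℂ)
    (hB : ∃ W : lp (fun _ : {i : I // α i ≠ ⊥} => ℂ) 2 ≃ₗᵢ[ℂ]
        lp (fun _ : {k : I // β k ≠ ⊤} => ℂ) 2,
      ∀ x k, W x k = ∑' i : {i : I // α i ≠ ⊥}, x i * B i k) :
    ∃ U : ℝ → (Lp ℂ 2 (volume.restrict Ω) ≃ₗᵢ[ℂ] Lp ℂ 2 (volume.restrict Ω)),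
      U 0 = LinearIsometryEquiv.refl ℂ (Lp ℂ 2 (volume.restrict Ω)) ∧
      (∀ s t f, U (s + t) f = U s (U t f)) ∧
      (∀ f, Continuous fun t => U t f) ∧
      -- the integrability property
      (∀ V : Set ℝ, IsOpen V → V ⊆ Ω → ∀ δ : ℝ, 0 < δ →
        (∀ s : ℝ, |s| < δ → (fun x => x + s) '' V ⊆ Ω) →
        ∀ s : ℝ, |s| < δ → ∀ f, ∀ᵐ x ∂(volume.restrict V),
          (U s f : ℝ → ℂ) x = (f : ℝ → ℂ) (x + s)) ∧
      ∀ ε : ℝ, 0 < ε → (ε : EReal) < ⨅ i, (β i - α i) →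
        -- transition at a finite left endpoint `α_i`
        (∀ (i : {i : I // α i ≠ ⊥}) (f : Lp ℂ 2 (volume.restrict Ω)),
          (∀ᵐ x ∂(volume.restrict Ω),
            x ∉ Set.Icc ((α i.1).toReal) ((α i.1).toReal + ε) → (f : ℝ → ℂ) x = 0) →
          ∃ g : {k : I // β k ≠ ⊤} → Lp ℂ 2 (volume.restrict Ω),
            (∀ k, (g k : ℝ → ℂ) =ᵐ[volume.restrict Ω]
              {x : ℝ | x + ((α i.1).toReal + ε - (β k.1).toReal) ∈ Ω}.indicator
                (fun x => (f : ℝ → ℂ) (x + ((α i.1).toReal + ε - (β k.1).toReal)))) ∧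
            HasSum (fun k => B i k • g k) (U ε f)) ∧
        -- transition at a finite right endpoint `β_k`
        (∀ (k : {k : I // β k ≠ ⊤}) (f : Lp ℂ 2 (volume.restrict Ω)),
          (∀ᵐ x ∂(volume.restrict Ω),
            x ∉ Set.Icc ((β k.1).toReal - ε) ((β k.1).toReal) → (f : ℝ → ℂ) x = 0) →
          ∃ g : {i : I // α i ≠ ⊥} → Lp ℂ 2 (volume.restrict Ω),
            (∀ j, (g j : ℝ → ℂ) =ᵐ[volume.restrict Ω]
              {x : ℝ | x + ((β k.1).toReal - (α j.1).toReal - ε) ∈ Ω}.indicator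
                (fun x => (f : ℝ → ℂ) (x + ((β k.1).toReal - (α j.1).toReal - ε)))) ∧
            HasSum (fun j => (starRingEnd ℂ) (B j k) • g j) (U (-ε) f)) := by
  subst hΩ
  exact statement6_general ⟨α, β, hαtop, hβbot, hdisj⟩ hl hB
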